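/- Let U ⊆ ℝ² be an open set, μ ∈ [0,1], ψ ∈ C²(U), and define w(ξ) := ψ(ξ)/√(1+|ξ|²). Then for every ξ ∈ U, ℱ(μ,ψ)(ξ) = 0 if and only if 𝒩_μ w(ξ) = 0; that is, ψ solves the equation ℱ(μ,ψ) = 0 at a point exactly when the normalized function w solves 𝒩_μ w = 0 there. -/

import Mathlib

open Real Set

/-- Partial derivative in the first conical coordinate. -/
noncomputable def pd1 (f : ℝ × ℝ → ℝ) (x : ℝ × ℝ) : ℝ := fderiv ℝ f x (1, 0)

/-- Partial derivative in the second conical coordinate. -/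
noncomputable def pd2 (f : ℝ × ℝ → ℝ) (x : ℝ × ℝ) : ℝ := fderiv ℝ f x (0, 1)

/-- `D²f[a,b] = Σ_{i,j} a_i b_j ∂_{ij} f` evaluated at `x`. -/
noncomputable def D2 (f : ℝ × ℝ → ℝ) (a b x : ℝ × ℝ) : ℝ :=
    a.1 * b.1 * pd1 (pd1 f) x + a.1 * b.2 * pd1 (pd2 f) x
  + a.2 * b.1 * pd2 (pd1 f) x + a.2 * b.2 * pd2 (pd2 f) x

/-- The gradient `Df` as a vector of `ℝ × ℝ`. -/
noncomputable def gradv (f : ℝ × ℝ → ℝ) (x : ℝ × ℝ) : ℝ × ℝ := (pd1 f x, pd2 f x)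

/-- `Df · ξ` at `x = ξ`. -/
noncomputable def dotxi (f : ℝ × ℝ → ℝ) (x : ℝ × ℝ) : ℝ := pd1 f x * x.1 + pd2 f x * x.2

/-- `χ = ψ − Dψ·ξ`. -/
noncomputable def chiF (ψ : ℝ × ℝ → ℝ) (x : ℝ × ℝ) : ℝ := ψ x - dotxi ψ x

/-- The squared scaled sound speed `a² = |Dψ|² + χ² − 1`. -/
noncomputable def sqSound (ψ : ℝ × ℝ → ℝ) (x : ℝ × ℝ) : ℝ :=
  (pd1 ψ x) ^ 2 + (pd2 ψ x) ^ 2 + (chiF ψ x) ^ 2 - 1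

/-- `ℱ(μ,ψ) = a²(Δψ + D²ψ[ξ,ξ]) − μ D²ψ[Dψ − χξ, Dψ − χξ]`;
`μ = 1` is the conical Chaplygin potential equation. -/
noncomputable def Fop (μ : ℝ) (ψ : ℝ × ℝ → ℝ) (x : ℝ × ℝ) : ℝ :=
  sqSound ψ x * (pd1 (pd1 ψ) x + pd2 (pd2 ψ) x + D2 ψ x x x)
    - μ * D2 ψ (gradv ψ x - chiF ψ x • x) (gradv ψ x - chiF ψ x • x) x

/-- `b²(w) = w² − 1 + (1+|ξ|²)(|Dw|² + (Dw·ξ)²)`. -/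
noncomputable def b2 (w : ℝ × ℝ → ℝ) (x : ℝ × ℝ) : ℝ :=
  (w x) ^ 2 - 1
    + (1 + x.1 ^ 2 + x.2 ^ 2) * ((pd1 w x) ^ 2 + (pd2 w x) ^ 2 + (dotxi w x) ^ 2)

/-- The operator `𝒩_μ`. -/
noncomputable def Nop (μ : ℝ) (w : ℝ × ℝ → ℝ) (x : ℝ × ℝ) : ℝ :=
  b2 w x * (pd1 (pd1 w) x + pd2 (pd2 w) x + D2 w x x x)
    - μ * (1 + x.1 ^ 2 + x.2 ^ 2) *
        D2 w (gradv w x + dotxi w x • x) (gradv w x + dotxi w x • x) x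
    + 2 * ((1 - μ) * b2 w x + μ * ((w x) ^ 2 - 1)) * dotxi w x
    + ((2 - μ) * b2 w x + μ * ((w x) ^ 2 - 1)) * w x / (1 + x.1 ^ 2 + x.2 ^ 2)

/-- Local uniform ellipticity of `𝒩_μ` with respect to `w` on `Ω`: on each compact
subset the principal-part matrix `b²(w)(I₂+ξξᵀ) − μ(1+|ξ|²)qqᵀ`, `q = Dw + (Dw·ξ)ξ`,
has eigenvalues bounded below by a positive constant. -/
def LocUnifElliptic (μ : ℝ) (w : ℝ × ℝ → ℝ) (Ω : Set (ℝ × ℝ)) : Prop :=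
  ∀ K : Set (ℝ × ℝ), K ⊆ Ω → IsCompact K → ∃ lam : ℝ, 0 < lam ∧
    ∀ x ∈ K, ∀ v : ℝ × ℝ,
      lam * (v.1 ^ 2 + v.2 ^ 2) ≤
        b2 w x * (v.1 ^ 2 + v.2 ^ 2 + (x.1 * v.1 + x.2 * v.2) ^ 2)
          - μ * (1 + x.1 ^ 2 + x.2 ^ 2) *
              ((pd1 w x + dotxi w x * x.1) * v.1 + (pd2 w x + dotxi w x * x.2) * v.2) ^ 2

/-!
Let `⟨ξ⟩ = √(1 + |ξ|²)`, so that `ψ = ⟨ξ⟩ w`. The matrix `I + ξξᵀ` governs the computation: `ℱ` and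
`𝒩_μ` both contain `tr((I + ξξᵀ)D²f)`, and the vector inserted in `D²w` is `q = (I + ξξᵀ)Dw`.
Since `D⟨ξ⟩ = ξ/⟨ξ⟩`, the substitution turns `Dψ − χξ` into `⟨ξ⟩ q` and leaves the
sound speed unchanged, `a²(ψ) = b²(w)`. Leibniz' rule for second derivatives then gives
`tr((I + ξξᵀ)D²ψ) = ⟨ξ⟩(tr((I + ξξᵀ)D²w) + 2 Dw·ξ + 2w/⟨ξ⟩²)` and, because
`⟨ξ⟩² Dw·q = b²(w) − (w² − 1)`,
`D²ψ[q, q] = (⟨ξ⟩² D²w[q, q] + (b²(w) − (w² − 1))(2 Dw·ξ + w/⟨ξ⟩²))/⟨ξ⟩`.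
Altogether `ℱ(μ, ψ) = ⟨ξ⟩ 𝒩_μ w`, and `⟨ξ⟩` never vanishes.
-/

section SecondDerivative

open scoped Topology

variable {𝕜 E F 𝔸 : Type*} [NontriviallyNormedField 𝕜]
  [NormedAddCommGroup E] [NormedSpace 𝕜 E] [NormedAddCommGroup F] [NormedSpace 𝕜 F]
  [NormedCommRing 𝔸] [NormedAlgebra 𝕜 𝔸] {x : E}

lemma differentiableAt_fderiv_of_contDiffAt {f : E → F} (hf : ContDiffAt 𝕜 2 f x) :
    DifferentiableAt 𝕜 (fderiv 𝕜 f) x :=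
  (hf.fderiv_right (m := 1) (by norm_num)).differentiableAt one_ne_zero

lemma fderiv_fderiv_apply {f : E → F} (hf : DifferentiableAt 𝕜 (fderiv 𝕜 f) x) (u v : E) :
    fderiv 𝕜 (fderiv 𝕜 f) x u v = fderiv 𝕜 (fun y => fderiv 𝕜 f y v) x u := by
  simp [fderiv_clm_apply hf (differentiableAt_const v)]

lemma fderiv_fderiv_mul {f g : E → 𝔸} (hf : ContDiffAt 𝕜 2 f x) (hg : ContDiffAt 𝕜 2 g x)
    (u v : E) :
    fderiv 𝕜 (fderiv 𝕜 fun y => f y * g y) x u v =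
      f x * fderiv 𝕜 (fderiv 𝕜 g) x u v + fderiv 𝕜 f x u * fderiv 𝕜 g x v +
        fderiv 𝕜 g x u * fderiv 𝕜 f x v + g x * fderiv 𝕜 (fderiv 𝕜 f) x u v := by
  have fderiv_mul_near : (fun y => fderiv 𝕜 (fun z => f z * g z) y v) =ᶠ[𝓝 x]
      fun y => f y * fderiv 𝕜 g y v + g y * fderiv 𝕜 f y v := by
    filter_upwards [hf.eventually (by simp), hg.eventually (by simp)] with y hfy hgy
    simp [fderiv_fun_mul (hfy.differentiableAt two_ne_zero) (hgy.differentiableAt two_ne_zero)]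
  have hf' := hf.differentiableAt two_ne_zero
  have hg' := hg.differentiableAt two_ne_zero
  have hf'' := differentiableAt_fderiv_of_contDiffAt hf
  have hg'' := differentiableAt_fderiv_of_contDiffAt hg
  have hf''v := hf''.clm_apply (differentiableAt_const v)
  have hg''v := hg''.clm_apply (differentiableAt_const v)
  rw [fderiv_fderiv_apply (differentiableAt_fderiv_of_contDiffAt (hf.mul hg)),
    fderiv_mul_near.fderiv_eq, fderiv_fun_add (hf'.fun_mul hg''v) (hg'.fun_mul hf''v),
    fderiv_fun_mul hf' hg''v, fderiv_fun_mul hg' hf''v]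
  simp only [add_apply, smul_apply, smul_eq_mul, fderiv_fderiv_apply hf'',
    fderiv_fderiv_apply hg'']
  ring

end SecondDerivative

section ConicalOperators

/-- The Euclidean inner product of `ℝ²`, written in coordinates because Mathlib gives `ℝ × ℝ`
the sup norm. -/
def dot (a b : ℝ × ℝ) : ℝ := a.1 * b.1 + a.2 * b.2

/-- The vector `q = (I + ξξᵀ)Df` on which `D²f` is evaluated in `𝒩_μ`. -/
noncomputable def conicalGrad (f : ℝ × ℝ → ℝ) (x : ℝ × ℝ) : ℝ × ℝ := gradv f x + dotxi f x • x

/-- The operator `Δf + D²f[ξ, ξ] = tr((I + ξξᵀ)D²f)`, the common second-order part of `ℱ(μ, ·)`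
and `𝒩_μ`. -/
noncomputable def conicalLaplacian (f : ℝ × ℝ → ℝ) (x : ℝ × ℝ) : ℝ :=
  pd1 (pd1 f) x + pd2 (pd2 f) x + D2 f x x x

lemma dot_add_left (a b c : ℝ × ℝ) : dot (a + b) c = dot a c + dot b c := by
  simp only [dot, Prod.fst_add, Prod.snd_add]
  ring

lemma dot_smul_left (r : ℝ) (a b : ℝ × ℝ) : dot (r • a) b = r * dot a b := by
  simp only [dot, Prod.smul_fst, Prod.smul_snd, smul_eq_mul]
  ring

lemma dot_comm (a b : ℝ × ℝ) : dot a b = dot b a := by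
  simp only [dot, mul_comm]

lemma dot_conicalGrad_left (f : ℝ × ℝ → ℝ) (x v : ℝ × ℝ) :
    dot (conicalGrad f x) v = dot (gradv f x) v + dotxi f x * dot x v := by
  rw [conicalGrad, dot_add_left, dot_smul_left]

lemma eq_fst_smul_add_snd_smul (v : ℝ × ℝ) :
    v = v.1 • ((1, 0) : ℝ × ℝ) + v.2 • ((0, 1) : ℝ × ℝ) := by
  ext <;> simp

lemma fderiv_apply_eq_dot_gradv (f : ℝ × ℝ → ℝ) (x v : ℝ × ℝ) :
    fderiv ℝ f x v = dot (gradv f x) v := by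
  conv_lhs => rw [eq_fst_smul_add_snd_smul v]
  simp only [map_add, map_smul, smul_eq_mul, dot, gradv, pd1, pd2]
  ring

lemma dotxi_eq_dot_gradv (f : ℝ × ℝ → ℝ) (x : ℝ × ℝ) : dotxi f x = dot (gradv f x) x := rfl

lemma sqSound_eq_dot_gradv (f : ℝ × ℝ → ℝ) (x : ℝ × ℝ) :
    sqSound f x = dot (gradv f x) (gradv f x) + chiF f x ^ 2 - 1 := by
  simp only [sqSound, dot, gradv, sq]

lemma D2_smul_smul (f : ℝ × ℝ → ℝ) (c : ℝ) (a b x : ℝ × ℝ) :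
    D2 f (c • a) (c • b) x = c ^ 2 * D2 f a b x := by
  simp only [D2, Prod.smul_fst, Prod.smul_snd, smul_eq_mul]
  ring

lemma conicalLaplacian_eq_D2_add_D2_add_D2 (f : ℝ × ℝ → ℝ) (x : ℝ × ℝ) :
    conicalLaplacian f x = D2 f (1, 0) (1, 0) x + D2 f (0, 1) (0, 1) x + D2 f x x x := by
  simp [conicalLaplacian, D2]

variable {f g : ℝ × ℝ → ℝ} {x : ℝ × ℝ}

lemma D2_eq_fderiv_fderiv (hf : DifferentiableAt ℝ (fderiv ℝ f) x) (a b : ℝ × ℝ) :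
    D2 f a b x = fderiv ℝ (fderiv ℝ f) x a b := by
  conv_rhs => rw [eq_fst_smul_add_snd_smul a, eq_fst_smul_add_snd_smul b]
  simp only [map_add, map_smul, add_apply, smul_apply, smul_eq_mul, fderiv_fderiv_apply hf]
  unfold D2 pd1 pd2
  ring

lemma gradv_mul (hf : DifferentiableAt ℝ f x) (hg : DifferentiableAt ℝ g x) :
    gradv (fun y => f y * g y) x = f x • gradv g x + g x • gradv f x := by
  ext <;> simp [gradv, pd1, pd2, fderiv_fun_mul hf hg]

lemma D2_mul (hf : ContDiffAt ℝ 2 f x) (hg : ContDiffAt ℝ 2 g x) (a b : ℝ × ℝ) :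
    D2 (fun y => f y * g y) a b x =
      f x * D2 g a b x + dot (gradv f x) a * dot (gradv g x) b +
        dot (gradv g x) a * dot (gradv f x) b + g x * D2 f a b x := by
  simp only [← fderiv_apply_eq_dot_gradv,
    D2_eq_fderiv_fderiv (differentiableAt_fderiv_of_contDiffAt (hf.mul hg)),
    D2_eq_fderiv_fderiv (differentiableAt_fderiv_of_contDiffAt hf),
    D2_eq_fderiv_fderiv (differentiableAt_fderiv_of_contDiffAt hg), fderiv_fderiv_mul hf hg]

lemma conicalLaplacian_mul (hf : ContDiffAt ℝ 2 f x) (hg : ContDiffAt ℝ 2 g x) :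
    conicalLaplacian (fun y => f y * g y) x =
      f x * conicalLaplacian g x + 2 * dot (gradv f x) (conicalGrad g x) +
        g x * conicalLaplacian f x := by
  simp only [conicalLaplacian_eq_D2_add_D2_add_D2, D2_mul hf hg]
  simp only [dot, conicalGrad, dotxi, gradv, Prod.fst_add, Prod.snd_add, Prod.smul_fst,
    Prod.smul_snd, smul_eq_mul]
  ring

end ConicalOperators

section JapaneseBracket

/-- The Japanese bracket `⟨ξ⟩ = √(1 + |ξ|²)`, the factor by which `ψ` and `w` differ. -/
noncomputable def japaneseBracket (x : ℝ × ℝ) : ℝ := √(1 + x.1 ^ 2 + x.2 ^ 2)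

lemma japaneseBracket_pos (x : ℝ × ℝ) : 0 < japaneseBracket x := sqrt_pos.2 (by positivity)

lemma japaneseBracket_sq (x : ℝ × ℝ) : japaneseBracket x ^ 2 = 1 + x.1 ^ 2 + x.2 ^ 2 :=
  sq_sqrt (by positivity)

lemma japaneseBracket_mul_self (x : ℝ × ℝ) :
    japaneseBracket x * japaneseBracket x = 1 + x.1 ^ 2 + x.2 ^ 2 := by
  rw [← sq, japaneseBracket_sq]

lemma dot_self_eq_japaneseBracket_sq_sub_one (x : ℝ × ℝ) :
    dot x x = japaneseBracket x ^ 2 - 1 := by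
  rw [japaneseBracket_sq, dot]
  ring

lemma contDiff_japaneseBracket {n : WithTop ℕ∞} : ContDiff ℝ n japaneseBracket :=
  ContDiff.sqrt (by fun_prop) fun x => by positivity

lemma gradv_one_add_sq_add_sq (x : ℝ × ℝ) :
    gradv (fun y => 1 + y.1 ^ 2 + y.2 ^ 2) x = (2 : ℝ) • x := by
  unfold gradv pd1 pd2
  rw [fderiv_fun_add (by fun_prop) (by fun_prop), fderiv_const_add,
    fderiv_fun_pow _ (by fun_prop), fderiv_fun_pow _ (by fun_prop), fderiv_fst, fderiv_snd]
  ext <;> simp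

lemma D2_one_add_sq_add_sq (a b x : ℝ × ℝ) :
    D2 (fun y => 1 + y.1 ^ 2 + y.2 ^ 2) a b x = 2 * dot a b := by
  have hpd1 : pd1 (fun y => 1 + y.1 ^ 2 + y.2 ^ 2) = fun y => 2 * y.1 :=
    funext fun y => congrArg Prod.fst (gradv_one_add_sq_add_sq y)
  have hpd2 : pd2 (fun y => 1 + y.1 ^ 2 + y.2 ^ 2) = fun y => 2 * y.2 :=
    funext fun y => congrArg Prod.snd (gradv_one_add_sq_add_sq y)
  simp only [D2, hpd1, hpd2]
  simp only [pd1, pd2, dot, differentiableAt_fst, differentiableAt_snd, fderiv_const_mul,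
    fderiv_fst, fderiv_snd, smul_apply, ContinuousLinearMap.coe_fst',
    ContinuousLinearMap.coe_snd', smul_eq_mul, mul_one, mul_zero, add_zero]
  ring

lemma gradv_japaneseBracket (x : ℝ × ℝ) :
    gradv japaneseBracket x = (japaneseBracket x)⁻¹ • x := by
  have hJ : DifferentiableAt ℝ japaneseBracket x :=
    contDiff_japaneseBracket.differentiable one_ne_zero x
  have leibniz := gradv_mul hJ hJ
  simp only [japaneseBracket_mul_self, gradv_one_add_sq_add_sq, ← two_smul ℝ (_ • _)] at leibniz
  rw [eq_inv_smul_iff₀ (japaneseBracket_pos x).ne']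
  exact (smul_right_injective (ℝ × ℝ) (two_ne_zero' ℝ) leibniz).symm

lemma D2_japaneseBracket (a b x : ℝ × ℝ) :
    D2 japaneseBracket a b x =
      (dot a b - dot x a * dot x b / japaneseBracket x ^ 2) / japaneseBracket x := by
  have hJ : ContDiffAt ℝ 2 japaneseBracket x := contDiff_japaneseBracket.contDiffAt
  have leibniz := D2_mul hJ hJ a b
  have := japaneseBracket_pos x
  simp only [japaneseBracket_mul_self, D2_one_add_sq_add_sq, gradv_japaneseBracket,
    dot_smul_left] at leibniz
  field_simp at leibniz ⊢
  linear_combination -leibniz / 2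

lemma conicalLaplacian_japaneseBracket (x : ℝ × ℝ) :
    conicalLaplacian japaneseBracket x = 2 / japaneseBracket x := by
  have := japaneseBracket_pos x
  have trace_dot : dot (1, 0) (1, 0) + dot (0, 1) (0, 1) = 2 := by norm_num [dot]
  have trace_dot_mul_dot : dot x (1, 0) ^ 2 + dot x (0, 1) ^ 2 = japaneseBracket x ^ 2 - 1 := by
    rw [← dot_self_eq_japaneseBracket_sq_sub_one]
    simp only [dot]
    ring
  simp only [conicalLaplacian_eq_D2_add_D2_add_D2, D2_japaneseBracket,
    dot_self_eq_japaneseBracket_sq_sub_one x]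
  field_simp
  linear_combination japaneseBracket x ^ 2 * trace_dot - trace_dot_mul_dot

lemma dot_self_conicalGrad (f : ℝ × ℝ → ℝ) (x : ℝ × ℝ) :
    dot x (conicalGrad f x) = japaneseBracket x ^ 2 * dotxi f x := by
  rw [dot_comm, dot_conicalGrad_left, ← dotxi_eq_dot_gradv, dot_self_eq_japaneseBracket_sq_sub_one]
  ring

lemma dot_conicalGrad_conicalGrad (f : ℝ × ℝ → ℝ) (x : ℝ × ℝ) :
    dot (conicalGrad f x) (conicalGrad f x) =
      dot (gradv f x) (conicalGrad f x) + japaneseBracket x ^ 2 * dotxi f x ^ 2 := by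
  rw [dot_conicalGrad_left, dot_self_conicalGrad]
  ring

lemma b2_eq_dot_gradv_conicalGrad (f : ℝ × ℝ → ℝ) (x : ℝ × ℝ) :
    b2 f x = f x ^ 2 - 1 + japaneseBracket x ^ 2 * dot (gradv f x) (conicalGrad f x) := by
  rw [japaneseBracket_sq, b2, dot_comm, dot_conicalGrad_left, dot_comm x, ← dotxi_eq_dot_gradv]
  simp only [dot, gradv, sq]

end JapaneseBracket

section Substitution

variable {w : ℝ × ℝ → ℝ} {x : ℝ × ℝ}

lemma gradv_japaneseBracket_mul (hw : DifferentiableAt ℝ w x) :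
    gradv (fun y => japaneseBracket y * w y) x =
      japaneseBracket x • gradv w x + (w x / japaneseBracket x) • x := by
  rw [gradv_mul (contDiff_japaneseBracket.differentiable one_ne_zero x) hw,
    gradv_japaneseBracket, smul_smul, div_eq_mul_inv]

lemma D2_japaneseBracket_mul (hw : ContDiffAt ℝ 2 w x) (a b : ℝ × ℝ) :
    D2 (fun y => japaneseBracket y * w y) a b x =
      japaneseBracket x * D2 w a b x +
        (dot x a * dot (gradv w x) b + dot (gradv w x) a * dot x b +
          w x * (dot a b - dot x a * dot x b / japaneseBracket x ^ 2)) / japaneseBracket x := by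
  rw [D2_mul contDiff_japaneseBracket.contDiffAt hw, gradv_japaneseBracket, D2_japaneseBracket,
    dot_smul_left, dot_smul_left]
  ring

lemma chiF_japaneseBracket_mul (hw : DifferentiableAt ℝ w x) :
    chiF (fun y => japaneseBracket y * w y) x =
      w x / japaneseBracket x - japaneseBracket x * dotxi w x := by
  have := japaneseBracket_pos x
  rw [chiF, dotxi_eq_dot_gradv, gradv_japaneseBracket_mul hw, dot_add_left, dot_smul_left,
    dot_smul_left, dot_self_eq_japaneseBracket_sq_sub_one, ← dotxi_eq_dot_gradv]
  field_simp
  ring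

lemma gradv_sub_chiF_smul_japaneseBracket_mul (hw : DifferentiableAt ℝ w x) :
    gradv (fun y => japaneseBracket y * w y) x - chiF (fun y => japaneseBracket y * w y) x • x =
      japaneseBracket x • conicalGrad w x := by
  rw [gradv_japaneseBracket_mul hw, chiF_japaneseBracket_mul hw, conicalGrad]
  module

lemma sqSound_japaneseBracket_mul (hw : DifferentiableAt ℝ w x) :
    sqSound (fun y => japaneseBracket y * w y) x = b2 w x := by
  have := japaneseBracket_pos x
  have hxx := dot_self_eq_japaneseBracket_sq_sub_one x
  rw [sqSound_eq_dot_gradv, chiF_japaneseBracket_mul hw, gradv_japaneseBracket_mul hw, b2,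
    ← japaneseBracket_sq]
  simp only [dot, gradv, dotxi, Prod.fst_add, Prod.snd_add, Prod.smul_fst, Prod.smul_snd,
    smul_eq_mul] at hxx ⊢
  field_simp
  linear_combination w x ^ 2 * hxx

lemma conicalLaplacian_japaneseBracket_mul (hw : ContDiffAt ℝ 2 w x) :
    conicalLaplacian (fun y => japaneseBracket y * w y) x =
      japaneseBracket x *
        (conicalLaplacian w x + 2 * dotxi w x + 2 * w x / japaneseBracket x ^ 2) := by
  have := japaneseBracket_pos x
  rw [conicalLaplacian_mul contDiff_japaneseBracket.contDiffAt hw, gradv_japaneseBracket,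
    conicalLaplacian_japaneseBracket, dot_smul_left, dot_self_conicalGrad]
  field_simp

lemma D2_japaneseBracket_mul_conicalGrad (hw : ContDiffAt ℝ 2 w x) :
    D2 (fun y => japaneseBracket y * w y) (conicalGrad w x) (conicalGrad w x) x =
      (japaneseBracket x ^ 2 * D2 w (conicalGrad w x) (conicalGrad w x) x +
        (b2 w x - (w x ^ 2 - 1)) * (2 * dotxi w x + w x / japaneseBracket x ^ 2)) /
        japaneseBracket x := by
  have := japaneseBracket_pos x
  rw [D2_japaneseBracket_mul hw, dot_self_conicalGrad, dot_conicalGrad_conicalGrad,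
    b2_eq_dot_gradv_conicalGrad]
  field_simp
  ring

lemma Fop_japaneseBracket_mul (μ : ℝ) (hw : ContDiffAt ℝ 2 w x) :
    Fop μ (fun y => japaneseBracket y * w y) x = japaneseBracket x * Nop μ w x := by
  have hw' := hw.differentiableAt two_ne_zero
  have := japaneseBracket_pos x
  rw [Fop, ← conicalLaplacian, sqSound_japaneseBracket_mul hw',
    conicalLaplacian_japaneseBracket_mul hw, gradv_sub_chiF_smul_japaneseBracket_mul hw',
    D2_smul_smul, D2_japaneseBracket_mul_conicalGrad hw, Nop, ← conicalLaplacian, ← conicalGrad,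
    ← japaneseBracket_sq]
  field_simp
  ring

end Substitution

theorem Fop_eq_zero_iff_Nop_eq_zero_general (μ : ℝ) {ψ : ℝ × ℝ → ℝ} {ξ : ℝ × ℝ}
    (hψ : ContDiffAt ℝ 2 ψ ξ) :
    Fop μ ψ ξ = 0 ↔ Nop μ (fun y => ψ y / japaneseBracket y) ξ = 0 := by
  have hw : ContDiffAt ℝ 2 (fun y => ψ y / japaneseBracket y) ξ :=
    hψ.div contDiff_japaneseBracket.contDiffAt (japaneseBracket_pos ξ).ne'
  have Fop_eq := Fop_japaneseBracket_mul μ hw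
  simp only [mul_div_cancel₀ _ (japaneseBracket_pos _).ne'] at Fop_eq
  rw [Fop_eq, mul_eq_zero_iff_left (japaneseBracket_pos ξ).ne']

/-- Equivalence of the equations `ℱ(μ,ψ) = 0` and `𝒩_μ w = 0` under the substitution
`w = ψ/√(1+|ξ|²)`: at every point of `U`, `ψ` solves `ℱ(μ,ψ) = 0` exactly when
the normalized function `w` solves `𝒩_μ w = 0`. -/
theorem Fop_eq_zero_iff_Nop_eq_zero
    (U : Set (ℝ × ℝ)) (hU : IsOpen U) (μ : ℝ) (hμ0 : 0 ≤ μ) (hμ1 : μ ≤ 1)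
    (ψ : ℝ × ℝ → ℝ) (hψ : ContDiffOn ℝ 2 ψ U)
    (w : ℝ × ℝ → ℝ)
    (hw : w = fun ξ : ℝ × ℝ => ψ ξ / Real.sqrt (1 + ξ.1 ^ 2 + ξ.2 ^ 2)) :
    ∀ ξ ∈ U, (Fop μ ψ ξ = 0 ↔ Nop μ w ξ = 0) := by
  subst hw
  exact fun ξ hξ => Fop_eq_zero_iff_Nop_eq_zero_general μ (hψ.contDiffAt (hU.mem_nhds hξ))
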